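/- arXiv:2303.14600 — 2 statements merged into one kernel-verified Lean document; each statement's English description precedes it below -/
import Mathlib

section
/- Let F(T) ∈ ℤ[T] be a nonconstant polynomial of degree D. There exists a constant c > 0 (depending only on F) such that for every positive integer q with α(q) ≠ 0, one has α(q) ≥ c·(log log 3q)^{−D}. -/
/-- `α(q) = (1/φ(q)) · #{a mod q : gcd(a·F(a), q) = 1}`. -/
noncomputable def alpha (F : Polynomial ℤ) (q : ℕ) : ℝ :=
  (Set.ncard {a : ℕ | a < q ∧ Int.gcd ((a : ℤ) * F.eval (a : ℤ)) (q : ℤ) = 1} : ℝ)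
    / (Nat.totient q : ℝ)

/-!
For a ring `R`, compare the number of `x ∈ R` with `G(x)` a unit, `G = T * F`, to the number of
units. This ratio is multiplicative in products and does not change under surjective homomorphisms
that reflect units, such as `ℤ/q → ∏_{p ∣ q} ℤ/p`. Hence `α(q) = ∏_{p ∣ q} N_p / (p - 1)`, where
`N_p` is the number of residues mod `p` at which `G` does not vanish. If `α(q) ≠ 0` then `N_p ≥ 1`
and `p ≤ N_p + D + 1` for all `p ∣ q`, so each factor is at least `exp (-D / p - O_D(1 / p²))`, and
it remains to see that `∑_{p ∣ q} 1 / p ≤ log log log 3q + O(1)`.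

For the last bound put `y = log 3q` and `σ = 1 / log y`. By Rankin's trick the sum is at most
`∑ p ^ (-1 - σ) + σ * ∑ (log p) / p`. The first term is at most `log ζ(1 + σ) ≤ log (1 + log y)`. In
the second, the primes `p ≤ y` contribute `O(log y)` because `∏_{p ≤ N} p ^ ⌊N / p⌋` divides `N!`,
and the primes `p > y` contribute at most `1` because their product divides `q`.
-/

section UnitValues

open Polynomial

variable {A R S : Type*} [CommRing A] [CommRing R] [CommRing S] [Algebra A R] [Algebra A S]

theorem natCard_preimage_of_surjective {M N : Type*} [AddGroup M] [AddGroup N] {f : M →+ N}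
    (hf : Function.Surjective f) (t : Set N) :
    Nat.card (f ⁻¹' t) = Nat.card f.ker * Nat.card t := by
  let e := QuotientAddGroup.quotientKerEquivOfSurjective f hf
  calc Nat.card (f ⁻¹' t) = Nat.card (f.ker × e ⁻¹' t) :=
        Nat.card_congr (QuotientAddGroup.preimageMkEquivAddSubgroupProdSet f.ker (e ⁻¹' t))
    _ = Nat.card f.ker * Nat.card (e ⁻¹' t) := Nat.card_prod _ _
    _ = Nat.card f.ker * Nat.card t := by
        rw [Nat.card_preimage_of_injective e.injective (by simp [e.surjective.range_eq])]

/-- The set of points of the `A`-algebra `R` at which the polynomial `G` takes a unit value. For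
`R = ℤ/q` and `G = T * F` these are the residues `a` with `gcd(a * F(a), q) = 1`. -/
def unitValues (G : A[X]) (R : Type*) [CommRing R] [Algebra A R] : Set R :=
  {x | IsUnit (aeval x G)}

theorem mem_unitValues {G : A[X]} {x : R} : x ∈ unitValues G R ↔ IsUnit (aeval x G) := Iff.rfl

variable (A R) in
theorem card_unitValues_X : Nat.card (unitValues (X : A[X]) R) = Nat.card Rˣ := by
  simp only [unitValues, aeval_X]
  exact Nat.card_congr (Submonoid.unitsTypeEquivIsUnitSubmonoid (M := R)).symm.toEquiv

theorem unitValues_eq_preimage (f : R →ₐ[A] S) [IsLocalHom f] (G : A[X]) :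
    unitValues G R = f ⁻¹' unitValues G S := by
  ext x
  rw [Set.mem_preimage, mem_unitValues, mem_unitValues, aeval_algHom_apply, isUnit_map_iff f]

theorem card_unitValues_eq_mul_of_surjective {f : R →ₐ[A] S} [IsLocalHom f]
    (hf : Function.Surjective f) (G : A[X]) :
    Nat.card (unitValues G R) = Nat.card (f : R →+ S).ker * Nat.card (unitValues G S) := by
  rw [unitValues_eq_preimage f]
  exact natCard_preimage_of_surjective (f := (f : R →+ S)) hf _

theorem card_unitValues_pi {ι : Type*} [Fintype ι] (K : ι → Type*) [∀ i, CommRing (K i)]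
    [∀ i, Algebra A (K i)] (G : A[X]) :
    Nat.card (unitValues G (∀ i, K i)) = ∏ i, Nat.card (unitValues G (K i)) := by
  have mem_iff (x : ∀ i, K i) : x ∈ unitValues G (∀ i, K i) ↔ ∀ i, x i ∈ unitValues G (K i) := by
    simp only [mem_unitValues, Pi.isUnit_iff]
    refine forall_congr' fun i ↦ ?_
    exact iff_of_eq (congrArg IsUnit (aeval_algHom_apply (Pi.evalAlgHom A K i) x G).symm)
  rw [← Nat.card_pi]
  exact Nat.card_congr ((Equiv.subtypeEquivRight mem_iff).trans Equiv.subtypePiEquivPi)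

theorem card_le_card_unitValues_add_natDegree {K : Type*} [Field K] [Finite K] [Algebra A K]
    {G : A[X]} (hG : (unitValues G K).Nonempty) :
    Nat.card K ≤ Nat.card (unitValues G K) + G.natDegree := by
  obtain ⟨x, hx⟩ := hG
  have hmap : G.map (algebraMap A K) ≠ 0 := fun h ↦ by
    rw [mem_unitValues, ← aeval_map_algebraMap K, h, map_zero, isUnit_zero_iff] at hx
    exact zero_ne_one hx
  have hcompl : (unitValues G K)ᶜ = G.rootSet K := by
    ext x
    rw [Set.mem_compl_iff, mem_unitValues, isUnit_iff_ne_zero, not_not, mem_rootSet',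
      and_iff_right hmap]
  rw [← Set.ncard_add_ncard_compl (unitValues G K), hcompl]
  exact Nat.add_le_add_left (ncard_rootSet_le G K) _

/-- The number of points of `R` at which `G` takes a unit value, divided by the number of units of
`R`. For `R = ℤ/q` and `G = T * F` this is `α(q)`. Meant for finite `R`: `Nat.card` is `0` on
infinite types. -/
noncomputable def unitValueRatio (G : A[X]) (R : Type*) [CommRing R] [Algebra A R] : ℝ :=
  Nat.card (unitValues G R) / Nat.card Rˣ

theorem unitValueRatio_eq_of_surjective [Finite R] {f : R →ₐ[A] S} [IsLocalHom f]
    (hf : Function.Surjective f) (G : A[X]) : unitValueRatio G R = unitValueRatio G S := by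
  have hker : (Nat.card (f : R →+ S).ker : ℝ) ≠ 0 := Nat.cast_ne_zero.2 Nat.card_pos.ne'
  rw [unitValueRatio, unitValueRatio, ← card_unitValues_X A R, ← card_unitValues_X A S,
    card_unitValues_eq_mul_of_surjective hf G, card_unitValues_eq_mul_of_surjective hf X,
    Nat.cast_mul, Nat.cast_mul, mul_div_mul_left _ _ hker]

theorem unitValueRatio_pi {ι : Type*} [Fintype ι] (K : ι → Type*) [∀ i, CommRing (K i)]
    [∀ i, Algebra A (K i)] (G : A[X]) :
    unitValueRatio G (∀ i, K i) = ∏ i, unitValueRatio G (K i) := by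
  simp only [unitValueRatio]
  rw [card_unitValues_pi, Nat.card_congr MulEquiv.piUnits.toEquiv, Nat.card_pi, Nat.cast_prod,
    Nat.cast_prod, Finset.prod_div_distrib]

end UnitValues

section ZMod

open Polynomial

/-- The ring homomorphism `ℤ/q → ∏_{p ∣ q} ℤ/p`, for `q ≠ 0` the reduction of `ℤ/q` modulo its
nilradical, through which the unit values of a polynomial modulo `q` are counted prime by prime. -/
def zmodToPi (q : ℕ) : ZMod q →ₐ[ℤ] ∀ p : q.primeFactors, ZMod p :=
  (RingHom.pi fun p : q.primeFactors ↦
    ZMod.castHom (Nat.dvd_of_mem_primeFactors p.2) (ZMod p)).toIntAlgHom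

theorem zmodToPi_surjective (q : ℕ) : Function.Surjective (zmodToPi q) := by
  have hcop : Pairwise (Function.onFun Nat.Coprime fun p : q.primeFactors ↦ (p : ℕ)) :=
    fun p r hpr ↦ (Nat.coprime_primes (Nat.prime_of_mem_primeFactors p.2)
      (Nat.prime_of_mem_primeFactors r.2)).2 (Subtype.coe_ne_coe.2 hpr)
  let e := ZMod.prodEquivPi _ hcop
  intro y
  obtain ⟨n, hn⟩ := ZMod.intCast_surjective (e.symm y)
  exact ⟨n, by rw [map_intCast, ← map_intCast e, hn, e.apply_symm_apply]⟩

theorem isLocalHom_zmodToPi {q : ℕ} (hq : q ≠ 0) : IsLocalHom (zmodToPi q) := by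
  have : NeZero q := ⟨hq⟩
  refine ⟨fun x hx ↦ ?_⟩
  obtain ⟨n, rfl⟩ := ZMod.natCast_zmod_surjective x
  rw [map_natCast, Pi.isUnit_iff] at hx
  rw [ZMod.isUnit_iff_coprime]
  by_contra hnq
  obtain ⟨p, hp, hpn, hpq⟩ := Nat.Prime.not_coprime_iff_dvd.1 hnq
  have hnp : IsUnit (n : ZMod p) := hx ⟨p, Nat.mem_primeFactors.2 ⟨hp, hpq, hq⟩⟩
  exact hp.coprime_iff_not_dvd.1 ((ZMod.isUnit_iff_coprime n p).1 hnp).symm hpn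

theorem unitValueRatio_zmod {q : ℕ} (hq : q ≠ 0) (G : ℤ[X]) :
    unitValueRatio G (ZMod q) = ∏ p ∈ q.primeFactors, unitValueRatio G (ZMod p) := by
  have : NeZero q := ⟨hq⟩
  have := isLocalHom_zmodToPi hq
  rw [unitValueRatio_eq_of_surjective (zmodToPi_surjective q), unitValueRatio_pi,
    Finset.prod_coe_sort q.primeFactors fun p ↦ unitValueRatio G (ZMod p)]

end ZMod

section Primes

open Real Finset

theorem prod_primesLE_pow_div_dvd_factorial (N : ℕ) :
    ∏ p ∈ N.primesLE, p ^ (N / p) ∣ N.factorial := by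
  refine Finset.prod_dvd_of_isRelPrime (fun p hp r hr hpr ↦ ?_) fun p hp ↦ ?_
  · exact Nat.coprime_iff_isRelPrime.1 <| Nat.coprime_pow_primes _ _ (Nat.prime_of_mem_primesLE hp)
      (Nat.prime_of_mem_primesLE hr) hpr
  · obtain ⟨hpN, hp⟩ := Nat.mem_primesLE.1 hp
    have hlog : Nat.log p N < Nat.log p N + 1 := Nat.lt_succ_self _
    refine (hp.pow_dvd_factorial_iff hlog).2 ?_
    have h1 : 1 ∈ Ico 1 (Nat.log p N + 1) :=
      mem_Ico.2 ⟨le_rfl, Nat.lt_succ_of_le (Nat.log_pos hp.one_lt hpN)⟩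
    simpa only [pow_one] using single_le_sum (f := fun i ↦ N / p ^ i) (fun _ _ ↦ Nat.zero_le _) h1

theorem sum_primesLE_log_div_le (N : ℕ) :
    ∑ p ∈ N.primesLE, log p / p ≤ 2 * log N := by
  rcases Nat.eq_zero_or_pos N with rfl | hN
  · simp
  have hlog_le : ∑ p ∈ N.primesLE, (N / p : ℕ) * log p ≤ N * log N := by
    have hle : ∏ p ∈ N.primesLE, p ^ (N / p) ≤ N ^ N :=
      (Nat.le_of_dvd N.factorial_pos (prod_primesLE_pow_div_dvd_factorial N)).trans
        N.factorial_le_pow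
    have hpos : 0 < ∏ p ∈ N.primesLE, p ^ (N / p) :=
      prod_pos fun p hp ↦ pow_pos (Nat.prime_of_mem_primesLE hp).pos _
    calc ∑ p ∈ N.primesLE, (N / p : ℕ) * log p = log (∏ p ∈ N.primesLE, p ^ (N / p) : ℕ) := by
          push_cast
          rw [log_prod fun p hp ↦
            pow_ne_zero _ (Nat.cast_ne_zero.2 (Nat.prime_of_mem_primesLE hp).ne_zero)]
          simp only [log_pow]
      _ ≤ log (N ^ N : ℕ) := log_le_log (mod_cast hpos) (mod_cast hle)
      _ = N * log N := by rw [Nat.cast_pow, log_pow]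
  have hdiv_le : ∀ p ∈ N.primesLE, N * (log p / p) ≤ 2 * ((N / p : ℕ) * log p) := by
    intro p hp
    obtain ⟨hpN, hp⟩ := Nat.mem_primesLE.1 hp
    have hfloor : (N / p : ℝ) ≤ 2 * (N / p : ℕ) := by
      have h1 : (1 : ℝ) ≤ (N / p : ℕ) := mod_cast (Nat.one_le_div_iff hp.pos).2 hpN
      have h2 := Nat.lt_floor_add_one (N / p : ℝ)
      rw [Nat.floor_div_eq_div] at h2
      linarith
    calc N * (log p / p) = N / p * log p := by ring
      _ ≤ 2 * (N / p : ℕ) * log p := by gcongr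
      _ = 2 * ((N / p : ℕ) * log p) := by ring
  refine le_of_mul_le_mul_left ?_ (Nat.cast_pos.2 hN : (0 : ℝ) < N)
  calc N * ∑ p ∈ N.primesLE, log p / p ≤ 2 * ∑ p ∈ N.primesLE, (N / p : ℕ) * log p := by
        rw [mul_sum, mul_sum]
        exact sum_le_sum hdiv_le
    _ ≤ N * (2 * log N) := by linarith

theorem sum_log_primeFactors_le (n : ℕ) : ∑ p ∈ n.primeFactors, log p ≤ log n := by
  rcases Nat.eq_zero_or_pos n with rfl | hn
  · simp
  have hpos : 0 < ∏ p ∈ n.primeFactors, p := prod_pos fun p hp ↦ Nat.pos_of_mem_primeFactors hp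
  rw [← log_prod fun p hp ↦ Nat.cast_ne_zero.2 (Nat.pos_of_mem_primeFactors hp).ne',
    ← Nat.cast_prod]
  exact log_le_log (mod_cast hpos)
    (mod_cast Nat.le_of_dvd hn n.prod_primeFactors_dvd)

theorem sum_log_div_primeFactors_le {n : ℕ} {y : ℝ} (hy : 1 ≤ y) (hny : log n ≤ y) :
    ∑ p ∈ n.primeFactors, log p / p ≤ 2 * log y + 1 := by
  have hy0 : 0 < y := by linarith
  have hterm (p : ℕ) : 0 ≤ log p / p := div_nonneg (log_natCast_nonneg p) p.cast_nonneg
  have hsmall : ∑ p ∈ n.primeFactors with p ≤ ⌊y⌋₊, log p / p ≤ 2 * log y :=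
    calc ∑ p ∈ n.primeFactors with p ≤ ⌊y⌋₊, log p / p
        ≤ ∑ p ∈ ⌊y⌋₊.primesLE, log p / p := by
          refine sum_le_sum_of_subset_of_nonneg (fun p hp ↦ ?_) fun p _ _ ↦ hterm p
          rw [mem_filter] at hp
          exact Nat.mem_primesLE.2 ⟨hp.2, Nat.prime_of_mem_primeFactors hp.1⟩
      _ ≤ 2 * log ⌊y⌋₊ := sum_primesLE_log_div_le _
      _ ≤ 2 * log y := by
          gcongr
          · exact mod_cast Nat.floor_pos.2 hy
          · exact Nat.floor_le hy0.le
  have hlarge : ∑ p ∈ n.primeFactors with ¬ p ≤ ⌊y⌋₊, log p / p ≤ 1 :=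
    calc ∑ p ∈ n.primeFactors with ¬ p ≤ ⌊y⌋₊, log p / p
        ≤ ∑ p ∈ n.primeFactors with ¬ p ≤ ⌊y⌋₊, log p / y := by
          refine sum_le_sum fun p hp ↦ ?_
          have hyp : y < p := (Nat.floor_lt hy0.le).1 (not_le.1 (mem_filter.1 hp).2)
          gcongr
      _ ≤ ∑ p ∈ n.primeFactors, log p / y :=
          sum_le_sum_of_subset_of_nonneg (filter_subset _ _)
            fun p _ _ ↦ div_nonneg (log_natCast_nonneg p) hy0.le
      _ ≤ 1 := by
          rw [← sum_div, div_le_one hy0]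
          exact (sum_log_primeFactors_le n).trans hny
  rw [← sum_filter_add_sum_filter_not n.primeFactors (· ≤ ⌊y⌋₊)]
  exact add_le_add hsmall hlarge

theorem sum_primes_le_log_tsum {f : ℕ →* ℝ} (hf : Summable f) (hf0 : ∀ n, 0 ≤ f n) {s : Finset ℕ}
    (hs : ∀ p ∈ s, p.Prime) : ∑ p ∈ s, f p ≤ log (∑' n, f n) := by
  have hlt (p : ℕ) (hp : p ∈ s) : 0 < 1 - f p := by
    have := (le_abs_self (f p)).trans_lt (hf.norm_lt_one (hs p hp).one_lt)
    linarith
  have hpos : 0 < ∏ p ∈ s, (1 - f p)⁻¹ := prod_pos fun p hp ↦ inv_pos.2 (hlt p hp)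
  calc ∑ p ∈ s, f p ≤ ∑ p ∈ s, log (1 - f p)⁻¹ := by
        refine sum_le_sum fun p hp ↦ ?_
        rw [log_inv]
        linarith [log_le_sub_one_of_pos (hlt p hp)]
    _ = log (∏ p ∈ s, (1 - f p)⁻¹) := (log_prod fun p hp ↦ (inv_pos.2 (hlt p hp)).ne').symm
    _ ≤ log (∑' n, f n) := by
        refine log_le_log hpos ?_
        have heuler := EulerProduct.prod_filter_prime_geometric_eq_tsum_factoredNumbers hf s
        rw [filter_true_of_mem hs] at heuler
        exact heuler.trans_le (hf.tsum_subtype_le f _ hf0)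

theorem tsum_rpow_neg_le {s : ℝ} (hs : 1 < s) : ∑' n : ℕ, (n : ℝ) ^ (-s) ≤ 1 + 1 / (s - 1) := by
  have hshift : ∑' n : ℕ, (n : ℝ) ^ (-s) = ∑' n : ℕ, 1 / (n + 1 : ℝ) ^ s := by
    rw [(summable_nat_rpow.2 (by linarith)).tsum_eq_zero_add, Nat.cast_zero,
      zero_rpow (by linarith), zero_add]
    refine tsum_congr fun n ↦ ?_
    rw [rpow_neg (by positivity), Nat.cast_succ, one_div]
  have hterm : 0 ≤ ZetaAsymptotics.termTSum s := tsum_nonneg fun n ↦ ZetaAsymptotics.term_nonneg _ _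
  have := ZetaAsymptotics.zeta_limit_aux1 hs
  have : 0 ≤ s * ZetaAsymptotics.termTSum s := by positivity
  linarith

theorem sum_primes_rpow_neg_le {s : ℝ} (hs : 1 < s) {t : Finset ℕ} (ht : ∀ p ∈ t, p.Prime) :
    ∑ p ∈ t, (p : ℝ) ^ (-s) ≤ log (1 + 1 / (s - 1)) := by
  let f : ℕ →* ℝ :=
    { toFun n := (n : ℝ) ^ (-s)
      map_one' := by simp
      map_mul' a b := by rw [Nat.cast_mul, mul_rpow a.cast_nonneg b.cast_nonneg] }
  have hf : Summable f := summable_nat_rpow.2 (by linarith)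
  have hf0 (n : ℕ) : 0 ≤ f n := rpow_nonneg n.cast_nonneg _
  have hpos : 0 < ∑' n, f n := hf.tsum_pos hf0 1 (by simp [f])
  exact (sum_primes_le_log_tsum hf hf0 ht).trans
    (log_le_log hpos (tsum_rpow_neg_le hs))

-- Rankin's trick: a harmonic sum over finitely many primes is compared with the Euler product of
-- `ζ(1 + σ)`, at the cost of `σ` times the sum of `log p / p`.
theorem inv_le_rpow_neg_add {x : ℝ} (hx : 0 < x) (σ : ℝ) :
    x⁻¹ ≤ x ^ (-(1 + σ)) + σ * (log x / x) :=
  calc x⁻¹ = x⁻¹ * (-σ * log x + 1) + σ * (log x / x) := by ring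
    _ ≤ x⁻¹ * exp (-σ * log x) + σ * (log x / x) := by gcongr; exact add_one_le_exp _
    _ = x ^ (-(1 + σ)) + σ * (log x / x) := by
        rw [neg_add, rpow_add hx, rpow_neg_one, rpow_def_of_pos hx, mul_comm (log x)]

theorem sum_inv_primeFactors_le {n : ℕ} {y : ℝ} (hy : 1 < y) (hny : log n ≤ y) :
    ∑ p ∈ n.primeFactors, (p : ℝ)⁻¹ ≤ log (1 + log y) + (2 + 1 / log y) := by
  have hL : 0 < log y := log_pos hy
  have hprime : ∀ p ∈ n.primeFactors, p.Prime := fun p hp ↦ Nat.prime_of_mem_primeFactors hp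
  set σ := 1 / log y with hσ
  have hσ0 : 0 < σ := by positivity
  calc ∑ p ∈ n.primeFactors, (p : ℝ)⁻¹
      ≤ ∑ p ∈ n.primeFactors, ((p : ℝ) ^ (-(1 + σ)) + σ * (log p / p)) :=
        sum_le_sum fun p hp ↦ inv_le_rpow_neg_add (Nat.cast_pos.2 (hprime p hp).pos) σ
    _ = ∑ p ∈ n.primeFactors, (p : ℝ) ^ (-(1 + σ)) + σ * ∑ p ∈ n.primeFactors, log p / p := by
        rw [sum_add_distrib, mul_sum]
    _ ≤ log (1 + 1 / (1 + σ - 1)) + σ * (2 * log y + 1) := by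
        gcongr
        · exact sum_primes_rpow_neg_le (by linarith) hprime
        · exact sum_log_div_primeFactors_le hy.le hny
    _ = log (1 + log y) + (2 + σ) := by
        rw [add_sub_cancel_left, hσ, one_div_one_div]
        field_simp

theorem one_lt_log_three_mul {q : ℕ} (hq : q ≠ 0) : 1 < log (3 * q) := by
  have hq1 : (1 : ℝ) ≤ q := mod_cast Nat.one_le_iff_ne_zero.2 hq
  rw [lt_log_iff_exp_lt (by positivity)]
  linarith [exp_one_lt_three]

theorem exists_sum_inv_primeFactors_le : ∃ C : ℝ, ∀ q : ℕ, q ≠ 0 →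
    ∑ p ∈ q.primeFactors, (p : ℝ)⁻¹ ≤ log (log (log (3 * q))) + C := by
  set m := log (log 3)
  have hm0 : 0 < m := log_pos (by simpa using one_lt_log_three_mul one_ne_zero)
  refine ⟨log (1 + 1 / m) + (2 + 1 / m), fun q hq ↦ ?_⟩
  have hq1 : (1 : ℝ) ≤ q := mod_cast Nat.one_le_iff_ne_zero.2 hq
  have hy := one_lt_log_three_mul hq
  set L := log (log (3 * q))
  have hmL : m ≤ L := log_le_log (by positivity) (log_le_log (by norm_num) (by linarith))
  have hL0 : 0 < L := hm0.trans_le hmL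
  calc ∑ p ∈ q.primeFactors, (p : ℝ)⁻¹ ≤ log (1 + L) + (2 + 1 / L) :=
        sum_inv_primeFactors_le hy (log_le_log (by linarith) (by linarith))
    _ ≤ log (L * (1 + 1 / m)) + (2 + 1 / m) := by
        gcongr
        have : 1 ≤ L / m := (one_le_div hm0).2 hmL
        linarith [mul_one_div L m]
    _ = log L + (log (1 + 1 / m) + (2 + 1 / m)) := by
        rw [log_mul hL0.ne' (by positivity), add_assoc]

theorem exp_neg_le_div_sub_one {D N x : ℝ} (hD : 0 ≤ D) (hN : 1 ≤ N) (hx : 1 < x)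
    (hxN : x ≤ N + (D + 1)) :
    exp (-(D * (x⁻¹ + (D + 1) * (D + 2) * (x ^ 2)⁻¹))) ≤ N / (x - 1) := by
  have hN0 : 0 < N := by linarith
  have hinv : N⁻¹ ≤ x⁻¹ + (D + 1) * (D + 2) * (x ^ 2)⁻¹ := by
    have hle_mul : x ≤ (D + 2) * N := by nlinarith
    have hsq : x ^ 2 ≤ N * (x + (D + 1) * (D + 2)) := by nlinarith
    rw [inv_le_iff_one_le_mul₀ hN0]
    calc (1 : ℝ) = x ^ 2 * (x ^ 2)⁻¹ := by field_simp
      _ ≤ N * (x + (D + 1) * (D + 2)) * (x ^ 2)⁻¹ := by gcongr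
      _ = (x⁻¹ + (D + 1) * (D + 2) * (x ^ 2)⁻¹) * N := by field_simp
  have hpos : 0 < N / (x - 1) := div_pos hN0 (by linarith)
  rw [← le_log_iff_exp_le hpos]
  calc -(D * (x⁻¹ + (D + 1) * (D + 2) * (x ^ 2)⁻¹)) ≤ -(D * N⁻¹) := by gcongr
    _ = 1 - (N + D) * N⁻¹ := by
        field_simp
        ring
    _ ≤ 1 - (x - 1) * N⁻¹ := by
        gcongr
        linarith
    _ = 1 - (N / (x - 1))⁻¹ := by rw [inv_div, div_eq_mul_inv]
    _ ≤ log (N / (x - 1)) := one_sub_inv_le_log_of_pos hpos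

end Primes

section Main

open Real Polynomial Finset

theorem alpha_eq_unitValueRatio (F : ℤ[X]) {q : ℕ} (hq : q ≠ 0) :
    alpha F q = unitValueRatio (X * F) (ZMod q) := by
  have : NeZero q := ⟨hq⟩
  have hmem (a : ℕ) : (a : ZMod q) ∈ unitValues (X * F) (ZMod q) ↔
      Int.gcd (a * F.eval (a : ℤ)) q = 1 := by
    have hval : aeval (a : ZMod q) (X * F) = ((a * F.eval (a : ℤ) : ℤ) : ZMod q) := by
      rw [map_mul, aeval_X, Int.cast_mul, Int.cast_natCast, ← coe_aeval_eq_eval,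
        ← eq_intCast (algebraMap ℤ (ZMod q)) (aeval (a : ℤ) F), ← aeval_algebraMap_apply,
        map_natCast]
    rw [mem_unitValues, hval, ZMod.coe_int_isUnit_iff_isCoprime, isCoprime_comm,
      Int.isCoprime_iff_gcd_eq_one]
  have himage : ((↑) : ℕ → ZMod q) '' {a | a < q ∧ Int.gcd (a * F.eval (a : ℤ)) q = 1} =
      unitValues (X * F) (ZMod q) := by
    ext x
    constructor
    · rintro ⟨a, ⟨-, ha⟩, rfl⟩
      exact (hmem a).2 ha
    · intro hx
      exact ⟨x.val, ⟨x.val_lt, (hmem _).1 (by rwa [ZMod.natCast_zmod_val])⟩, x.natCast_zmod_val⟩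
  have hinj : Set.InjOn ((↑) : ℕ → ZMod q)
      {a | a < q ∧ Int.gcd (a * F.eval (a : ℤ)) q = 1} := fun a ha b hb hab ↦
    ((ZMod.natCast_eq_natCast_iff a b q).1 hab).eq_of_lt_of_lt ha.1 hb.1
  rw [alpha, unitValueRatio, ← hinj.ncard_image, himage, Nat.card_coe_set_eq,
    Nat.card_eq_fintype_card, ZMod.card_units_eq_totient]

theorem exp_neg_le_unitValueRatio_of_prime {D p : ℕ} (hp : p.Prime) {G : ℤ[X]}
    (hG : G.natDegree ≤ D + 1) (hG0 : unitValueRatio G (ZMod p) ≠ 0) :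
    exp (-(D * ((p : ℝ)⁻¹ + (D + 1) * (D + 2) * ((p : ℝ) ^ 2)⁻¹))) ≤
      unitValueRatio G (ZMod p) := by
  have : Fact p.Prime := ⟨hp⟩
  have hcard : Nat.card (unitValues G (ZMod p)) ≠ 0 := fun h ↦ hG0 (by simp [unitValueRatio, h])
  have hne : (unitValues G (ZMod p)).Nonempty :=
    Set.nonempty_coe_sort.1 (Nat.card_ne_zero.1 hcard).1
  have hle : p ≤ Nat.card (unitValues G (ZMod p)) + (D + 1) := by
    have := card_le_card_unitValues_add_natDegree hne
    rw [Nat.card_zmod] at this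
    lia
  have hunits : (Nat.card (ZMod p)ˣ : ℝ) = p - 1 := by
    rw [Nat.card_eq_fintype_card, ZMod.card_units, Nat.cast_pred hp.pos]
  rw [unitValueRatio, hunits]
  exact exp_neg_le_div_sub_one D.cast_nonneg (mod_cast Nat.one_le_iff_ne_zero.2 hcard)
    (mod_cast hp.one_lt) (mod_cast hle)

theorem exp_neg_sum_le_unitValueRatio {D q : ℕ} (hq : q ≠ 0) {G : ℤ[X]}
    (hG : G.natDegree ≤ D + 1) (hG0 : unitValueRatio G (ZMod q) ≠ 0) :
    exp (-(D * (∑ p ∈ q.primeFactors, (p : ℝ)⁻¹ +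
      (D + 1) * (D + 2) * ∑ p ∈ q.primeFactors, ((p : ℝ) ^ 2)⁻¹))) ≤
      unitValueRatio G (ZMod q) := by
  rw [unitValueRatio_zmod hq] at hG0 ⊢
  rw [mul_sum, ← sum_add_distrib, mul_sum, ← sum_neg_distrib, exp_sum]
  exact prod_le_prod (fun _ _ ↦ (exp_pos _).le) fun p hp ↦
    exp_neg_le_unitValueRatio_of_prime (Nat.prime_of_mem_primeFactors hp) hG
      (prod_ne_zero_iff.1 hG0 p hp)

theorem exists_mul_log_log_rpow_le_unitValueRatio (D : ℕ) :
    ∃ c : ℝ, 0 < c ∧ ∀ (G : ℤ[X]) (q : ℕ), G.natDegree ≤ D + 1 → q ≠ 0 →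
      unitValueRatio G (ZMod q) ≠ 0 →
      c * log (log (3 * q)) ^ (-(D : ℝ)) ≤ unitValueRatio G (ZMod q) := by
  obtain ⟨C, hC⟩ := exists_sum_inv_primeFactors_le
  let Z : ℝ := ∑' n : ℕ, ((n : ℝ) ^ 2)⁻¹
  refine ⟨exp (-(D * (C + (D + 1) * (D + 2) * Z))), exp_pos _, fun G q hG hq hG0 ↦ ?_⟩
  have hL : 0 < log (log (3 * q)) := log_pos (one_lt_log_three_mul hq)
  have hZ : ∑ p ∈ q.primeFactors, ((p : ℝ) ^ 2)⁻¹ ≤ Z :=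
    (summable_nat_pow_inv.2 one_lt_two).sum_le_tsum _ fun _ _ ↦ by positivity
  calc exp (-(D * (C + (D + 1) * (D + 2) * Z))) * log (log (3 * q)) ^ (-(D : ℝ))
      = exp (-(D * (log (log (log (3 * q))) + C + (D + 1) * (D + 2) * Z))) := by
        rw [rpow_def_of_pos hL, ← exp_add]
        ring_nf
    _ ≤ exp (-(D * (∑ p ∈ q.primeFactors, (p : ℝ)⁻¹ +
          (D + 1) * (D + 2) * ∑ p ∈ q.primeFactors, ((p : ℝ) ^ 2)⁻¹))) := by
        gcongr
        exact hC q hq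
    _ ≤ unitValueRatio G (ZMod q) := exp_neg_sum_le_unitValueRatio hq hG hG0

theorem stmt10_general (D : ℕ) :
    ∃ c : ℝ, 0 < c ∧ ∀ F : ℤ[X], F.natDegree ≤ D → ∀ q : ℕ, 0 < q → alpha F q ≠ 0 →
      c * log (log (3 * q)) ^ (-(D : ℝ)) ≤ alpha F q := by
  obtain ⟨c, hc, hle⟩ := exists_mul_log_log_rpow_le_unitValueRatio D
  refine ⟨c, hc, fun F hF q hq hα ↦ ?_⟩
  rw [alpha_eq_unitValueRatio F hq.ne'] at hα ⊢
  have hdeg : (X * F).natDegree ≤ D + 1 := by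
    have := natDegree_mul_le_of_le natDegree_X_le hF
    lia
  exact hle _ q hdeg hq.ne' hα

end Main

/-- **Estimate (1.5).** If `F` is nonconstant of degree `D`, then whenever `α(q) ≠ 0`, one has
`α(q) ≫_F (log log 3q)^{-D}`. -/
theorem stmt10 (F : Polynomial ℤ) (hFdeg : 0 < F.natDegree) :
    ∃ c : ℝ, 0 < c ∧ ∀ q : ℕ, 0 < q → alpha F q ≠ 0 →
      c * Real.log (Real.log (3 * (q : ℝ))) ^ (-(F.natDegree : ℝ)) ≤ alpha F q := by
  obtain ⟨c, hc, hle⟩ := stmt10_general F.natDegree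
  exact ⟨c, hc, hle F le_rfl⟩
end

section
/- Let R and S be integers with R ≠ 0 and set F(T) = RT + S. For every ε > 0 there exists J₀ such that for all integers J ≥ J₀, all positive integers q with gcd(q, 6R) = 1, and all units w modulo q, the quantity V = #{(v₁, …, v_J) ∈ ((ℤ/qℤ)^×)^J : ∏_{i=1}^J (R·v_i + S) ≡ w (mod q)} satisfies |φ(q)·V − (φ(q)·α(q))^J| ≤ ε·(φ(q)·α(q))^J. -/
/-- `α(q)` for the linear polynomial `F(T) = RT + S`:
`α(q) = (1/φ(q)) · #{a mod q : gcd(a·F(a), q) = 1}`. -/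
noncomputable def alphaLin (R S : ℤ) (q : ℕ) : ℝ :=
  (Set.ncard {a : ℕ | a < q ∧ Int.gcd ((a : ℤ) * (R * (a : ℤ) + S)) (q : ℤ) = 1} : ℝ)
    / (Nat.totient q : ℝ)

/-
`V` counts the representations of `w` as a product of `J` elements of the set `A` of units `u`
mod `q` for which `u - S` is again a unit. If `N_J(w)` is the number of such representations in a
finite abelian group `G`, and `E_J(w) = |G| N_J(w) - |A|^J`, then `∑_u E_J(u) = 0` gives
`E_{J+1}(w) = -∑_{u ∉ A} E_J(w / u)`, so each further factor multiplies the error by at most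
`|G \ A|`. Modulo `p^k` at most a fraction `1 / (p - 1)` of the units lies outside `A`, so the
relative error there is at most `(p - 1) / (p - 2)^J`. By the Chinese remainder theorem
`1 + relative error` is multiplicative, and
`∏_{p ≥ 5} (1 + (p - 1) / (p - 2)^J) ≤ exp (O (3^{-J}))` for `J ≥ 3`.
-/

open Finset

section Representations

variable {G H : Type*} [CommMonoid G] [DecidableEq G] [CommMonoid H] [DecidableEq H]

/-- The number of representations of `w` as an ordered product of `J` elements of `A`. -/
def repCount (A : Finset G) (J : ℕ) (w : G) : ℕ :=
  #{u ∈ Fintype.piFinset fun _ : Fin J ↦ A | ∏ i, u i = w}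

theorem repCount_zero (A : Finset G) (w : G) : repCount A 0 w = if w = 1 then 1 else 0 := by
  simp [repCount, eq_comm (a := w), apply_ite]

theorem sum_repCount [Fintype G] (A : Finset G) (J : ℕ) : ∑ w, repCount A J w = #A ^ J := by
  rw [← Fintype.card_piFinset_const, card_eq_sum_card_fiberwise (f := fun u ↦ ∏ i, u i)
    (t := univ) fun _ _ ↦ mem_univ _]
  rfl

theorem repCount_map (e : G ≃* H) (A : Finset G) (J : ℕ) (w : G) :
    repCount (A.map e.toEquiv.toEmbedding) J (e w) = repCount A J w := by
  refine (card_equiv (Equiv.piCongrRight fun _ ↦ e.toEquiv) fun u ↦ ?_).symm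
  simp [← map_prod]

theorem repCount_product (A : Finset G) (B : Finset H) (J : ℕ) (w : G × H) :
    repCount (A ×ˢ B) J w = repCount A J w.1 * repCount B J w.2 := by
  rw [repCount, repCount, repCount, ← card_product]
  refine card_equiv (Equiv.arrowProdEquivProdArrow _ _ _) fun u ↦ ?_
  simp [Equiv.arrowProdEquivProdArrow, Prod.ext_iff, Prod.fst_prod, Prod.snd_prod, forall_and,
    and_and_and_comm]

theorem repCount_succ {G : Type*} [CommGroup G] [DecidableEq G] (A : Finset G)
    (J : ℕ) (w : G) :
    repCount A (J + 1) w = ∑ u ∈ A, repCount A J (w / u) := by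
  have hmaps : ∀ v ∈ ({v ∈ Fintype.piFinset fun _ : Fin (J + 1) ↦ A | ∏ i, v i = w} : Finset _),
      v 0 ∈ A := fun v hv ↦ Fintype.mem_piFinset.1 (mem_filter.1 hv).1 0
  rw [repCount, card_eq_sum_card_fiberwise hmaps]
  refine sum_congr rfl fun u hu ↦ ?_
  refine card_nbij' (fun v ↦ Fin.tail v) (fun v ↦ Fin.cons u v) ?_ ?_ ?_ ?_
  · intro v hv
    simp only [coe_filter, mem_filter, Fintype.mem_piFinset, Set.mem_ofPred_eq] at hv ⊢
    obtain ⟨⟨hA, hprod⟩, rfl⟩ := hv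
    rw [Fin.prod_univ_succ] at hprod
    exact ⟨fun i ↦ hA i.succ, eq_div_of_mul_eq'' hprod⟩
  · intro v hv
    simp only [coe_filter, mem_filter, Fintype.mem_piFinset, Set.mem_ofPred_eq] at hv ⊢
    obtain ⟨hA, hprod⟩ := hv
    refine ⟨⟨Fin.cases hu hA, ?_⟩, rfl⟩
    rw [Fin.prod_cons, hprod, mul_div_cancel]
  · intro v hv
    obtain rfl : v 0 = u := (mem_filter.1 hv).2
    exact Fin.cons_self_tail v
  · intro v _
    exact Fin.tail_cons (α := fun _ ↦ G) u v

theorem repCount_one {G : Type*} [CommGroup G] [DecidableEq G] (A : Finset G) (w : G) :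
    repCount A 1 w = if w ∈ A then 1 else 0 := by
  simp [repCount_succ, repCount_zero, div_eq_one]

end Representations

theorem abs_mul_sub_mul_le {𝕜 : Type*} [CommRing 𝕜] [LinearOrder 𝕜] [IsStrictOrderedRing 𝕜]
    {a b x y δ η : 𝕜} (hx : 0 ≤ x) (hy : 0 ≤ y) (ha : |a - x| ≤ δ * x)
    (hb : |b - y| ≤ η * y) :
    |a * b - x * y| ≤ ((1 + δ) * (1 + η) - 1) * (x * y) := by
  calc |a * b - x * y| = |(a - x) * (b - y) + x * (b - y) + (a - x) * y| := by ring_nf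
    _ ≤ |a - x| * |b - y| + x * |b - y| + |a - x| * y := by
      refine (abs_add_three _ _ _).trans_eq ?_
      rw [abs_mul, abs_mul, abs_mul, abs_of_nonneg hx, abs_of_nonneg hy]
    _ ≤ δ * x * (η * y) + x * (η * y) + δ * x * y := by
      have := (abs_nonneg _).trans ha
      gcongr
    _ = ((1 + δ) * (1 + η) - 1) * (x * y) := by ring

section Equidistribution

variable {G H : Type*} [CommGroup G] [DecidableEq G] [Fintype G]
  [CommGroup H] [DecidableEq H] [Fintype H]

theorem card_mul_repCount_succ_sub (A : Finset G) (J : ℕ) (w : G) :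
    (Fintype.card G : ℝ) * repCount A (J + 1) w - (#A : ℝ) ^ (J + 1)
      = -∑ u ∈ Aᶜ, ((Fintype.card G : ℝ) * repCount A J (w / u) - (#A : ℝ) ^ J) := by
  have htotal : ∑ u, (repCount A J (w / u) : ℝ) = (#A : ℝ) ^ J := by
    rw [← Nat.cast_pow, ← sum_repCount, Nat.cast_sum]
    exact Fintype.sum_equiv (Equiv.divLeft w) _ _ fun _ ↦ rfl
  have hsplit : (repCount A (J + 1) w : ℝ)
      = (#A : ℝ) ^ J - ∑ u ∈ Aᶜ, (repCount A J (w / u) : ℝ) := by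
    rw [repCount_succ, Nat.cast_sum, ← htotal, ← sum_add_sum_compl A, add_sub_cancel_right]
  have hcard : (Fintype.card G : ℝ) = #A + #Aᶜ := by
    exact_mod_cast (card_add_card_compl A).symm
  rw [hsplit, sum_sub_distrib, ← mul_sum, sum_const, nsmul_eq_mul, hcard]
  ring

theorem abs_card_mul_repCount_succ_sub_le (A : Finset G) (J : ℕ) (w : G) :
    |(Fintype.card G : ℝ) * repCount A (J + 1) w - (#A : ℝ) ^ (J + 1)|
      ≤ Fintype.card G * (#Aᶜ : ℝ) ^ J := by
  induction J generalizing w with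
  | zero =>
    have hA : (#A : ℝ) ≤ Fintype.card G := by exact_mod_cast card_le_univ A
    rw [zero_add, repCount_one, pow_one, pow_zero, mul_one, abs_le]
    split_ifs <;> constructor <;> push_cast <;> linarith [Nat.cast_nonneg (α := ℝ) #A]
  | succ J ih =>
    rw [card_mul_repCount_succ_sub, abs_neg]
    calc _ ≤ ∑ u ∈ Aᶜ, |(Fintype.card G : ℝ) * repCount A (J + 1) (w / u) - (#A : ℝ) ^ (J + 1)| :=
          abs_sum_le_sum_abs _ _
      _ ≤ ∑ _u ∈ Aᶜ, Fintype.card G * (#Aᶜ : ℝ) ^ J := sum_le_sum fun u _ ↦ ih (w / u)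
      _ = Fintype.card G * (#Aᶜ : ℝ) ^ (J + 1) := by
          rw [sum_const, nsmul_eq_mul, pow_succ]
          ring

/-- The products of `J` elements of `A` are equidistributed in `G` up to a relative error `δ`:
every element of `G` has `|A|^J / |G|` representations up to a factor in `[1 - δ, 1 + δ]`. -/
def EquidistributedProducts (A : Finset G) (J : ℕ) (δ : ℝ) : Prop :=
  ∀ w : G, |(Fintype.card G : ℝ) * repCount A J w - (#A : ℝ) ^ J| ≤ δ * (#A : ℝ) ^ J

theorem equidistributedProducts_univ {J : ℕ} (hJ : J ≠ 0) :
    EquidistributedProducts (univ : Finset G) J 0 := by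
  obtain ⟨I, rfl⟩ := Nat.exists_eq_succ_of_ne_zero hJ
  intro w
  rw [card_mul_repCount_succ_sub]
  simp

theorem EquidistributedProducts.of_map {A : Finset G} {J : ℕ} {δ : ℝ} (e : G ≃* H)
    (h : EquidistributedProducts (A.map e.toEquiv.toEmbedding) J δ) :
    EquidistributedProducts A J δ := by
  intro w
  simpa only [repCount_map, card_map, Fintype.card_congr e.toEquiv] using h (e w)

theorem EquidistributedProducts.product {A : Finset G} {B : Finset H} {J : ℕ} {δ η : ℝ}
    (hA : EquidistributedProducts A J δ) (hB : EquidistributedProducts B J η) :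
    EquidistributedProducts (A ×ˢ B) J ((1 + δ) * (1 + η) - 1) := by
  intro w
  have := abs_mul_sub_mul_le (by positivity) (by positivity) (hA w.1) (hB w.2)
  rw [repCount_product, card_product, Fintype.card_prod]
  push_cast
  rw [mul_pow, mul_mul_mul_comm]
  exact this

theorem equidistributedProducts_of_mul_card_compl_le {A : Finset G} {J : ℕ} (hJ : J ≠ 0) {x : ℝ}
    (hx : 0 < x) (hA : (x + 1) * #Aᶜ ≤ Fintype.card G) :
    EquidistributedProducts A J ((x + 1) / x ^ J) := by
  obtain ⟨I, rfl⟩ := Nat.exists_eq_succ_of_ne_zero hJ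
  have hcard : (Fintype.card G : ℝ) = #A + #Aᶜ := by
    exact_mod_cast (card_add_card_compl A).symm
  have hcompl : (#Aᶜ : ℝ) ≤ #A / x := by
    rw [le_div_iff₀ hx]
    linarith
  intro w
  calc _ ≤ (Fintype.card G : ℝ) * (#Aᶜ : ℝ) ^ I := abs_card_mul_repCount_succ_sub_le A I w
    _ ≤ (#A + #A / x) * (#A / x) ^ I := by
      rw [hcard]
      gcongr
    _ = (x + 1) / x ^ (I + 1) * (#A : ℝ) ^ (I + 1) := by
      rw [div_pow, pow_succ x, pow_succ (#A : ℝ)]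
      field_simp

end Equidistribution

section ShiftedUnits

variable {M M₁ M₂ : Type*} [CommRing M] [Fintype M] [DecidableEq M]
  [CommRing M₁] [Fintype M₁] [DecidableEq M₁] [CommRing M₂] [Fintype M₂] [DecidableEq M₂]

/-- The units `u` of `M` for which `u - c` is a unit as well. If `r` is a unit, these are the units
among the values `r * v + c` at units `v`, see `mem_shiftedUnits_iff_exists`. -/
def shiftedUnits (c : M) : Finset Mˣ := {u | IsUnit ((u : M) - c)}

@[simp]
theorem mem_shiftedUnits {c : M} {u : Mˣ} : u ∈ shiftedUnits c ↔ IsUnit ((u : M) - c) := by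
  simp [shiftedUnits]

theorem mem_shiftedUnits_iff_exists {r c : M} (hr : IsUnit r) {u : Mˣ} :
    u ∈ shiftedUnits c ↔ ∃ v : Mˣ, r * v + c = u := by
  obtain ⟨r, rfl⟩ := hr
  rw [mem_shiftedUnits]
  constructor
  · rintro ⟨x, hx⟩
    exact ⟨r⁻¹ * x, by simp [hx]⟩
  · rintro ⟨v, hv⟩
    simp [← hv]

theorem card_compl_shiftedUnits_add_card_units_le (c : M) :
    #(shiftedUnits c)ᶜ + Fintype.card Mˣ ≤ Fintype.card M := by
  let shift : Mˣ ↪ M := ⟨fun u ↦ u - c, fun _ _ h ↦ Units.ext (sub_left_injective h)⟩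
  let val : Mˣ ↪ M := ⟨Units.val, Units.val_injective⟩
  have hdisj : Disjoint ((shiftedUnits c)ᶜ.map shift) (univ.map val) := by
    rw [disjoint_left]
    rintro _ hx hy
    obtain ⟨u, hu, rfl⟩ := mem_map.1 hx
    obtain ⟨v, -, hv⟩ := mem_map.1 hy
    exact mem_compl.1 hu (mem_shiftedUnits.2 ⟨v, hv⟩)
  calc #(shiftedUnits c)ᶜ + Fintype.card Mˣ
      = #((shiftedUnits c)ᶜ.map shift ∪ univ.map val) := by
        rw [card_union_of_disjoint hdisj, card_map, card_map, card_univ]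
    _ ≤ Fintype.card M := card_le_univ _

theorem map_shiftedUnits_eq_product (e : M ≃+* M₁ × M₂) (c : M) :
    (shiftedUnits c).map
        ((Units.mapEquiv e.toMulEquiv).trans MulEquiv.prodUnits).toEquiv.toEmbedding
      = shiftedUnits (e c).1 ×ˢ shiftedUnits (e c).2 := by
  ext y
  obtain ⟨u, rfl⟩ := ((Units.mapEquiv e.toMulEquiv).trans MulEquiv.prodUnits).surjective y
  have hu : IsUnit ((u : M) - c) ↔ IsUnit ((e u).1 - (e c).1) ∧ IsUnit ((e u).2 - (e c).2) := by
    rw [← MulEquiv.isUnit_map e, map_sub, Prod.isUnit_iff, Prod.fst_sub, Prod.snd_sub]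
  simpa [MulEquiv.prodUnits] using hu

theorem ncard_isUnit_and_isUnit_affine {r : M} (hr : IsUnit r) (c : M) :
    Set.ncard {x : M | IsUnit x ∧ IsUnit (r * x + c)} = #(shiftedUnits c) := by
  have hinj : Function.Injective fun x : M ↦ r * x + c :=
    fun _ _ h ↦ hr.mul_left_cancel (add_right_cancel h)
  have himage : (fun x ↦ r * x + c) '' {x : M | IsUnit x ∧ IsUnit (r * x + c)}
      = Units.val '' (shiftedUnits c : Set Mˣ) := by
    ext y
    constructor
    · rintro ⟨_, ⟨⟨v, rfl⟩, ⟨u, hu⟩⟩, rfl⟩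
      exact ⟨u, (mem_shiftedUnits_iff_exists hr).2 ⟨v, hu.symm⟩, hu⟩
    · rintro ⟨u, hu, rfl⟩
      obtain ⟨v, hv⟩ := (mem_shiftedUnits_iff_exists hr).1 hu
      exact ⟨v, ⟨v.isUnit, hv ▸ u.isUnit⟩, hv⟩
  rw [← Set.ncard_image_of_injective _ hinj, himage,
    Set.ncard_image_of_injective _ Units.val_injective, Set.ncard_coe_finset]

theorem ncard_prod_affine_eq_repCount {r : M} (hr : IsUnit r) (c : M) (J : ℕ) (w : Mˣ) :
    Set.ncard {v : Fin J → Mˣ | ∏ i, (r * v i + c) = w} = repCount (shiftedUnits c) J w := by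
  have hF : Function.Injective fun (v : Fin J → Mˣ) i ↦ r * (v i : M) + c := fun _ _ h ↦
    funext fun i ↦ Units.ext (hr.mul_left_cancel (add_right_cancel (congrFun h i)))
  have hval : Function.Injective fun (u : Fin J → Mˣ) i ↦ (u i : M) := fun _ _ h ↦
    funext fun i ↦ Units.ext (congrFun h i)
  rw [repCount, ← Set.ncard_coe_finset, ← Set.ncard_image_of_injective _ hF,
    ← Set.ncard_image_of_injective _ hval]
  congr 1
  ext y
  simp only [coe_filter, Fintype.mem_piFinset, Set.mem_image, Set.mem_ofPred_eq]
  constructor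
  · rintro ⟨v, hv, rfl⟩
    have hunit : ∀ i, IsUnit (r * (v i : M) + c) := IsUnit.prod_univ_iff.1 (hv ▸ w.isUnit)
    choose u hu using hunit
    refine ⟨u, ⟨fun i ↦ (mem_shiftedUnits_iff_exists hr).2 ⟨v i, (hu i).symm⟩, ?_⟩, funext hu⟩
    rw [Units.ext_iff, ← hv, Units.coe_prod, prod_congr rfl fun i _ ↦ hu i]
  · rintro ⟨u, ⟨huA, rfl⟩, rfl⟩
    choose v hv using fun i ↦ (mem_shiftedUnits_iff_exists hr).1 (huA i)
    exact ⟨v, by simp only [hv, Units.coe_prod], funext hv⟩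

end ShiftedUnits

theorem card_compl_shiftedUnits_prime_pow_le {p k : ℕ} [NeZero (p ^ k)] (hp : p.Prime) (hk : 0 < k)
    (c : ZMod (p ^ k)) : (p - 1) * #(shiftedUnits c)ᶜ ≤ (p ^ k).totient := by
  have hpow : p ^ k = (p ^ k).totient + p ^ (k - 1) := by
    rw [Nat.totient_prime_pow hp hk, ← Nat.mul_succ, Nat.succ_eq_add_one,
      Nat.sub_add_cancel hp.one_le, pow_sub_one_mul hk.ne']
  have hle := card_compl_shiftedUnits_add_card_units_le c
  rw [ZMod.card_units_eq_totient, ZMod.card] at hle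
  calc (p - 1) * #(shiftedUnits c)ᶜ ≤ (p - 1) * p ^ (k - 1) := by
        gcongr
        omega
    _ = (p ^ k).totient := by rw [Nat.totient_prime_pow hp hk, mul_comm]

theorem equidistributedProducts_shiftedUnits_prime_pow {p k J : ℕ} [NeZero (p ^ k)] (hp : p.Prime)
    (hp2 : 2 < p) (hk : 0 < k) (hJ : J ≠ 0) (c : ZMod (p ^ k)) :
    EquidistributedProducts (shiftedUnits c) J ((p - 1) / (p - 2) ^ J) := by
  have hcompl : ((p : ℝ) - 1) * #(shiftedUnits c)ᶜ ≤ Fintype.card (ZMod (p ^ k))ˣ := by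
    rw [ZMod.card_units_eq_totient, ← Nat.cast_pred hp.pos]
    exact_mod_cast card_compl_shiftedUnits_prime_pow_le hp hk c
  have hx : (0 : ℝ) < p - 2 := sub_pos.2 (by exact_mod_cast hp2)
  have hsub : (p : ℝ) - 1 = p - 2 + 1 := by ring
  rw [hsub] at hcompl ⊢
  exact equidistributedProducts_of_mul_card_compl_le hJ hx hcompl

theorem equidistributedProducts_shiftedUnits_zmod {q J : ℕ} [hq₀ : NeZero q] (hq : Odd q)
    (hJ : J ≠ 0) (c : ZMod q) :
    EquidistributedProducts (shiftedUnits c) J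
      (∏ p ∈ q.primeFactors, (1 + ((p : ℝ) - 1) / (p - 2) ^ J) - 1) := by
  induction q using Nat.recOnPosPrimePosCoprime generalizing hq₀ with
  | zero => exact absurd rfl hq₀.out
  | one =>
    have huniv : shiftedUnits c = univ := by
      ext u
      simpa only [mem_shiftedUnits, mem_univ, iff_true] using isUnit_of_subsingleton _
    rw [huniv, Nat.primeFactors_one, prod_empty, sub_self]
    exact equidistributedProducts_univ hJ
  | prime_pow p k hp hk =>
    have hp2 : 2 < p := by
      refine hp.two_le.lt_of_ne' fun h ↦ ?_
      simp [h, Nat.odd_pow_iff hk.ne', Nat.odd_iff] at hq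
    rw [Nat.primeFactors_prime_pow hk.ne' hp, prod_singleton, add_sub_cancel_left]
    exact equidistributedProducts_shiftedUnits_prime_pow hp hp2 hk hJ c
  | coprime m n hm hn hmn ihm ihn =>
    have : NeZero m := ⟨by omega⟩
    have : NeZero n := ⟨by omega⟩
    obtain ⟨hm_odd, hn_odd⟩ := Nat.odd_mul.1 hq
    rw [hmn.primeFactors_mul, prod_union hmn.disjoint_primeFactors]
    have hprod := (ihm hm_odd (ZMod.chineseRemainder hmn c).1).product
      (ihn hn_odd (ZMod.chineseRemainder hmn c).2)
    rw [← map_shiftedUnits_eq_product] at hprod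
    simpa only [add_sub_cancel] using hprod.of_map

theorem ncard_natCast_zmod {q : ℕ} [NeZero q] (P : ZMod q → Prop) :
    Set.ncard {a : ℕ | a < q ∧ P a} = Set.ncard {x : ZMod q | P x} := by
  refine Set.ncard_congr (fun a _ ↦ (a : ZMod q)) (fun a ha ↦ ha.2) ?_ ?_
  · rintro a b ⟨ha, -⟩ ⟨hb, -⟩ hab
    rw [← ZMod.val_cast_of_lt ha, hab, ZMod.val_cast_of_lt hb]
  · intro x hx
    exact ⟨x.val, ⟨x.val_lt, by rwa [ZMod.natCast_zmod_val]⟩, ZMod.natCast_zmod_val x⟩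

theorem gcd_mul_affine_eq_one_iff (R S a : ℤ) (q : ℕ) :
    Int.gcd (a * (R * a + S)) q = 1 ↔
      IsUnit (a : ZMod q) ∧ IsUnit ((R : ZMod q) * a + S) := by
  rw [← IsUnit.mul_iff, ← Int.isCoprime_iff_gcd_eq_one, isCoprime_comm,
    ← ZMod.coe_int_isUnit_iff_isCoprime]
  push_cast
  rfl

theorem totient_mul_alphaLin {R : ℤ} {q : ℕ} [NeZero q] (hR : IsUnit (R : ZMod q)) (S : ℤ) :
    (q.totient : ℝ) * alphaLin R S q = #(shiftedUnits (S : ZMod q)) := by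
  have hφ : (q.totient : ℝ) ≠ 0 := by
    exact_mod_cast (Nat.totient_pos.2 (NeZero.pos q)).ne'
  rw [alphaLin, mul_div_cancel₀ _ hφ, ← ncard_isUnit_and_isUnit_affine hR, ← ncard_natCast_zmod]
  simp only [gcd_mul_affine_eq_one_iff, Int.cast_natCast]

theorem totient_mul_alphaLin_pow_nonneg (R S : ℤ) (q J : ℕ) :
    0 ≤ ((q.totient : ℝ) * alphaLin R S q) ^ J := by
  rw [alphaLin]
  positivity

theorem sub_one_div_sub_two_pow_le {x : ℝ} (hx : 5 ≤ x) {J : ℕ} (hJ : 3 ≤ J) :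
    (x - 1) / (x - 2) ^ J ≤ 100 / 3 ^ J * (1 / x ^ 2) := by
  obtain ⟨I, rfl⟩ := Nat.exists_eq_add_of_le hJ
  -- Equality at `x = 5`, so the constant `100 = 4 * 5 ^ 2` cannot be improved.
  have hcubic : 27 * x ^ 2 * (x - 1) ≤ 100 * (x - 2) ^ 3 := by
    nlinarith [pow_nonneg (sub_nonneg.2 hx) 2, pow_nonneg (sub_nonneg.2 hx) 3]
  have hpow : (3 : ℝ) ^ I ≤ (x - 2) ^ I := by
    gcongr
    linarith
  have hx₂ : 0 < x - 2 := by linarith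
  rw [div_mul_div_comm, mul_one, div_le_div_iff₀ (by positivity) (by positivity)]
  calc (x - 1) * (3 ^ (3 + I) * x ^ 2) = 27 * x ^ 2 * (x - 1) * 3 ^ I := by ring
    _ ≤ 100 * (x - 2) ^ 3 * (x - 2) ^ I := by gcongr
    _ = 100 * (x - 2) ^ (3 + I) := by ring

theorem five_le_of_prime_of_dvd {p q : ℕ} (hq : q.Coprime 6) (hp : p.Prime) (hpq : p ∣ q) :
    5 ≤ p := by
  have hp6 : p.Coprime 6 := hq.coprime_dvd_left hpq
  by_contra! hlt
  interval_cases p <;> revert hp hp6 <;> decide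

theorem prod_primeFactors_le_exp {q J : ℕ} (hq : q.Coprime 6) (hJ : 3 ≤ J) :
    ∏ p ∈ q.primeFactors, (1 + ((p : ℝ) - 1) / (p - 2) ^ J)
      ≤ Real.exp (50 * Real.pi ^ 2 / 3 ^ (J + 1)) := by
  have hfive (p) (hp : p ∈ q.primeFactors) : (5 : ℝ) ≤ p := by
    exact_mod_cast five_le_of_prime_of_dvd hq (Nat.prime_of_mem_primeFactors hp)
      (Nat.dvd_of_mem_primeFactors hp)
  calc ∏ p ∈ q.primeFactors, (1 + ((p : ℝ) - 1) / (p - 2) ^ J)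
      ≤ ∏ p ∈ q.primeFactors, (1 + 100 / 3 ^ J * (1 / (p : ℝ) ^ 2)) := by
        refine prod_le_prod (fun p hp ↦ ?_) fun p hp ↦ ?_
        · have := hfive p hp
          exact add_nonneg zero_le_one (div_nonneg (by linarith) (pow_nonneg (by linarith) J))
        · gcongr 1 + ?_
          exact sub_one_div_sub_two_pow_le (hfive p hp) hJ
    _ ≤ Real.exp (∑ p ∈ q.primeFactors, 100 / 3 ^ J * (1 / (p : ℝ) ^ 2)) :=
        Real.prod_one_add_le_exp_sum _ fun _ ↦ by positivity
    _ ≤ Real.exp (100 / 3 ^ J * (Real.pi ^ 2 / 6)) := by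
        rw [← mul_sum]
        gcongr
        exact sum_le_hasSum _ (fun _ _ ↦ by positivity) hasSum_zeta_two
    _ = Real.exp (50 * Real.pi ^ 2 / 3 ^ (J + 1)) := by
        congr 1
        ring

theorem tendsto_exp_div_pow_sub_one (C : ℝ) :
    Filter.Tendsto (fun J : ℕ ↦ Real.exp (C / 3 ^ (J + 1)) - 1) Filter.atTop (nhds 0) := by
  have hpow : Filter.Tendsto (fun J : ℕ ↦ (3 : ℝ) ^ (J + 1)) Filter.atTop Filter.atTop :=
    (Filter.tendsto_add_atTop_iff_nat 1).2 (tendsto_pow_atTop_atTop_of_one_lt (by norm_num))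
  simpa using ((Real.continuous_exp.tendsto 0).comp (hpow.const_div_atTop C)).sub_const 1

theorem stmt14_general (R S : ℤ) {J q : ℕ} (hJ : 3 ≤ J) (hgcd : Int.gcd (q : ℤ) (6 * R) = 1)
    (w : (ZMod q)ˣ) :
    |(q.totient : ℝ) *
        (Set.ncard {v : Fin J → (ZMod q)ˣ |
          ∏ i, ((R : ZMod q) * (v i : ZMod q) + (S : ZMod q)) = (w : ZMod q)} : ℝ)
      - ((q.totient : ℝ) * alphaLin R S q) ^ J|
    ≤ (Real.exp (50 * Real.pi ^ 2 / 3 ^ (J + 1)) - 1)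
      * ((q.totient : ℝ) * alphaLin R S q) ^ J := by
  have hcop : IsCoprime (q : ℤ) (6 * R) := Int.isCoprime_iff_gcd_eq_one.2 hgcd
  have hq6 : q.Coprime 6 := Nat.isCoprime_iff_coprime.1 (by exact_mod_cast hcop.of_mul_right_left)
  have hR : IsUnit (R : ZMod q) :=
    (ZMod.coe_int_isUnit_iff_isCoprime R q).2 hcop.of_mul_right_right
  have : NeZero q := ⟨by rintro rfl; simp at hq6⟩
  have hodd : Odd q := Nat.Coprime.odd_of_right (hq6.coprime_dvd_right (by norm_num : 2 ∣ 6))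
  have hequi := equidistributedProducts_shiftedUnits_zmod hodd (by omega : J ≠ 0) (S : ZMod q) w
  rw [ZMod.card_units_eq_totient, ← ncard_prod_affine_eq_repCount hR] at hequi
  rw [totient_mul_alphaLin hR]
  refine hequi.trans ?_
  gcongr
  exact prod_primeFactors_le_exp hq6 hJ

/-- **Hypothesis A for linear `F` (§4).** For `F(T) = RT + S` with `R ≠ 0`: uniformly over
`q` coprime to `6R` and units `w` mod `q`, the count `V` of tuples `(v₁, …, v_J)` of units
mod `q` with `∏ (R vᵢ + S) ≡ w (mod q)` satisfies `φ(q) V = (φ(q) α(q))^J (1 + o(1))`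
as `J → ∞`. -/
theorem stmt14 (R S : ℤ) (hR : R ≠ 0) :
    ∀ ε : ℝ, 0 < ε → ∃ J₀ : ℕ, ∀ J : ℕ, J₀ ≤ J →
      ∀ q : ℕ, 0 < q → Int.gcd (q : ℤ) (6 * R) = 1 →
        ∀ w : (ZMod q)ˣ,
          |(Nat.totient q : ℝ) *
              (Set.ncard {v : Fin J → (ZMod q)ˣ |
                ∏ i, ((R : ZMod q) * ((v i : (ZMod q)ˣ) : ZMod q) + (S : ZMod q))
                  = (w : ZMod q)} : ℝ)
            - ((Nat.totient q : ℝ) * alphaLin R S q) ^ J|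
          ≤ ε * ((Nat.totient q : ℝ) * alphaLin R S q) ^ J := by
  intro ε hε
  obtain ⟨J₀, hJ₀⟩ := Filter.eventually_atTop.1 <|
    ((tendsto_exp_div_pow_sub_one _).eventually_le_const hε).and (Filter.eventually_ge_atTop 3)
  exact ⟨J₀, fun J hJ q _ hgcd w ↦ (stmt14_general R S (hJ₀ J hJ).2 hgcd w).trans <|
    mul_le_mul_of_nonneg_right (hJ₀ J hJ).1 (totient_mul_alphaLin_pow_nonneg R S q J)⟩
end
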